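/- There exists a compact set L ⊆ ℂ with empty interior in ℂ (so that ã_1(L) = 0) such that there exists a nonconstant function f : ℂ → ℂ which is continuous on ℂ, holomorphic on ℂ∖L, and has a finite limit at infinity (so that ã_0(L) = a(L) > 0). In particular there is a compact L with ã_1(L) = 0 < ã_0(L). -/

import Mathlib

open Filter

/-!
A compact set `L` of positive area contained in the complement of a countable dense set has empty
interior. The Cauchy transform `C(z) = ∫_L dA(w) / (z - w)` is continuous, because `w ↦ w⁻¹` is
locally integrable in the plane and translation is continuous in `L¹`. It is holomorphic off `L`,
and `z * C(z)` tends to the area of `L` at infinity. Hence `C` vanishes at infinity without being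
identically zero, so it is not constant.
-/

section PositiveMeasure

open MeasureTheory

theorem exists_isCompact_interior_eq_empty_measure_pos {X : Type*} [TopologicalSpace X]
    [TopologicalSpace.SeparableSpace X] [MeasurableSpace X] [MeasurableSingletonClass X]
    (μ : Measure X) [NeZero μ] [NullSingletonClass μ] [μ.InnerRegular] :
    ∃ K : Set X, IsCompact K ∧ interior K = ∅ ∧ 0 < μ K := by
  obtain ⟨D, hD_countable, hD_dense⟩ := TopologicalSpace.exists_countable_dense X
  have hD_compl : 0 < μ Dᶜ := by
    rw [Set.compl_eq_univ_sdiff, measure_sdiff_null (hD_countable.measure_zero μ)]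
    exact Measure.measure_univ_pos.2 (NeZero.ne μ)
  obtain ⟨K, hKD, hK, hK_pos⟩ := hD_countable.measurableSet.compl.exists_lt_isCompact hD_compl
  exact ⟨K, hK, Set.subset_eq_empty (interior_mono hKD) hD_dense.interior_compl, hK_pos⟩

end PositiveMeasure

section Convolution

open MeasureTheory Topology Pointwise ENNReal

variable {G E : Type*} [AddCommGroup G] [TopologicalSpace G] [IsTopologicalAddGroup G]
  [MeasurableSpace G] [BorelSpace G] [NormedAddCommGroup E] [NormedSpace ℝ E]
  {μ : Measure G} [IsLocallyFiniteMeasure μ] [μ.InnerRegularCompactLTTop]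
  [μ.IsAddLeftInvariant] [μ.IsNegInvariant] {k : G → E}

theorem continuous_setIntegral_comp_sub_left_of_integrable (hk : Integrable k μ) (s : Set G) :
    Continuous fun z ↦ ∫ w in s, k (z - w) ∂μ := by
  have hk_neg : MemLp (fun w ↦ k (-w)) 1 μ := memLp_one_iff_integrable.2 hk.comp_neg
  have : Fact ((1 : ℝ≥0∞) ≠ ∞) := ⟨one_ne_top⟩
  have h_translate : Continuous fun z : G ↦ DomAddAct.mk (-z) +ᵥ hk_neg.toLp :=
    (DomAddAct.continuous_mk.comp continuous_neg).vadd continuous_const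
  refine ((continuous_setIntegral s).comp h_translate).congr fun z ↦ ?_
  refine integral_congr_ae (ae_restrict_of_ae ?_)
  have h_neg_translate := hk_neg.comp_measurePreserving (measurePreserving_vadd (-z) μ)
  filter_upwards [h_neg_translate.coeFn_toLp] with w hw
  exact hw.trans (congrArg k (by simp [sub_eq_add_neg, add_comm]))

theorem continuous_setIntegral_comp_sub_left_of_isCompact [T2Space G] [LocallyCompactSpace G]
    (hk : LocallyIntegrable k μ) {K : Set G} (hK : IsCompact K) :
    Continuous fun z ↦ ∫ w in K, k (z - w) ∂μ := by
  refine continuous_iff_continuousAt.2 fun z₀ ↦ ?_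
  obtain ⟨N, hN, hN_nhds⟩ := exists_compact_mem_nhds z₀
  have hNK : IsCompact (N - K) := by
    simpa only [sub_eq_add_neg] using hN.add hK.neg
  have h_cutoff : Continuous fun z ↦ ∫ w in K, (N - K).indicator k (z - w) ∂μ :=
    continuous_setIntegral_comp_sub_left_of_integrable
      ((integrable_indicator_iff hNK.measurableSet).2 (hk.integrableOn_isCompact hNK)) K
  refine h_cutoff.continuousAt.congr ?_
  filter_upwards [hN_nhds] with z hz
  refine setIntegral_congr_fun hK.measurableSet fun w hw ↦ ?_
  exact Set.indicator_of_mem (Set.sub_mem_sub hz hw) k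

end Convolution

section CauchyTransform

open MeasureTheory Topology Bornology

/-- The Cauchy transform `z ↦ ∫ dμ(w) / (z - w)` of a measure on the plane, a source of functions
holomorphic off the support of `μ`. It is normalised without the factor `1 / π`, and takes the
value `0` where the kernel is not integrable. -/
noncomputable def cauchyTransform (μ : Measure ℂ) (z : ℂ) : ℂ :=
  ∫ w, (z - w)⁻¹ ∂μ

theorem locallyIntegrable_complex_inv : LocallyIntegrable (fun w : ℂ ↦ w⁻¹) := by
  refine locallyIntegrable_of_norm_le_rpow (C := 1) (α := 1) (by simp) (by simp)
    (ae_of_all _ fun w ↦ ?_) (by fun_prop)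
  simp [Real.rpow_neg_one]

theorem continuous_cauchyTransform_restrict {K : Set ℂ} (hK : IsCompact K) :
    Continuous (cauchyTransform (volume.restrict K)) :=
  continuous_setIntegral_comp_sub_left_of_isCompact locallyIntegrable_complex_inv hK

variable {μ : Measure ℂ} [IsFiniteMeasure μ]

theorem differentiableOn_cauchyTransform :
    DifferentiableOn ℂ (cauchyTransform μ) μ.supportᶜ := by
  intro z hz
  obtain ⟨δ, hδ, h_ball⟩ := Metric.isOpen_iff.1 Measure.isOpen_compl_support z hz
  have h_dist : ∀ᵐ w ∂μ, ∀ x ∈ Metric.ball z (δ / 2), δ / 2 ≤ ‖x - w‖ := by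
    filter_upwards [Measure.support_mem_ae] with w hw x hx
    have hwz : δ ≤ dist w z := not_lt.1 fun h ↦ h_ball h hw
    have hxz : dist x z < δ / 2 := hx
    have := dist_triangle_left w z x
    rw [← dist_eq_norm]
    linarith
  have h_integrable : Integrable (fun w ↦ (z - w)⁻¹) μ := by
    refine Integrable.of_bound (Measurable.aestronglyMeasurable (by fun_prop)) (δ / 2)⁻¹ ?_
    filter_upwards [h_dist] with w hw
    rw [norm_inv]
    gcongr
    exact hw z (Metric.mem_ball_self (half_pos hδ))
  refine (hasDerivAt_integral_of_dominated_loc_of_deriv_le (F' := fun x w ↦ -1 / (x - w) ^ 2)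
    (bound := fun _ ↦ 1 / (δ / 2) ^ 2) (Metric.ball_mem_nhds z (half_pos hδ))
    (Eventually.of_forall fun x ↦ Measurable.aestronglyMeasurable (by fun_prop)) h_integrable
    (Measurable.aestronglyMeasurable (by fun_prop)) ?_ (integrable_const _)
    ?_).2.differentiableAt.differentiableWithinAt
  · filter_upwards [h_dist] with w hw x hx
    rw [norm_div, norm_pow, norm_neg, norm_one]
    gcongr
    exact hw x hx
  · filter_upwards [h_dist] with w hw x hx
    have hxw : x - w ≠ 0 := norm_pos_iff.1 ((half_pos hδ).trans_le (hw x hx))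
    exact ((hasDerivAt_id x).sub_const w).fun_inv hxw

theorem tendsto_mul_sub_inv_cobounded {𝕜 : Type*} [NormedDivisionRing 𝕜] (w : 𝕜) :
    Tendsto (fun z ↦ z * (z - w)⁻¹) (cobounded 𝕜) (𝓝 1) := by
  have h_inv : Tendsto (fun z ↦ (z - w)⁻¹) (cobounded 𝕜) (𝓝 0) :=
    tendsto_inv₀_cobounded.comp (tendsto_sub_const_cobounded w)
  have h_lim : Tendsto (fun z ↦ 1 + w * (z - w)⁻¹) (cobounded 𝕜) (𝓝 1) := by
    simpa using (h_inv.const_mul w).const_add 1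
  refine h_lim.congr' ?_
  filter_upwards [eventually_ne_cobounded w] with z hz
  have hzw : z - w ≠ 0 := sub_ne_zero.2 hz
  rw [← mul_inv_cancel₀ hzw, ← add_mul, sub_add_cancel]

theorem norm_mul_sub_inv_le_two {𝕜 : Type*} [NormedDivisionRing 𝕜] {z w : 𝕜} (h : 2 * ‖w‖ ≤ ‖z‖) :
    ‖z * (z - w)⁻¹‖ ≤ 2 := by
  rw [norm_mul, norm_inv]
  refine mul_inv_le_of_le_mul₀ (norm_nonneg _) zero_le_two ?_
  linarith [norm_sub_norm_le z w]

theorem tendsto_mul_cauchyTransform_cobounded (hμ : IsBounded μ.support) :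
    Tendsto (fun z ↦ z * cauchyTransform μ z) (cobounded ℂ) (𝓝 (μ.real Set.univ : ℂ)) := by
  obtain ⟨R, hR⟩ := hμ.exists_norm_le
  have : (cobounded ℂ).IsCountablyGenerated := by
    rw [← comap_norm_atTop]
    infer_instance
  have h_lim : Tendsto (fun z ↦ ∫ w, z * (z - w)⁻¹ ∂μ) (cobounded ℂ) (𝓝 (∫ _, 1 ∂μ)) := by
    refine tendsto_integral_filter_of_dominated_convergence (fun _ ↦ 2)
      (Eventually.of_forall fun z ↦ Measurable.aestronglyMeasurable (by fun_prop)) ?_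
      (integrable_const _) (ae_of_all _ tendsto_mul_sub_inv_cobounded)
    filter_upwards [eventually_cobounded_le_norm (2 * R)] with z hz
    filter_upwards [Measure.support_mem_ae] with w hw
    exact norm_mul_sub_inv_le_two (by linarith [hR w hw])
  simpa [cauchyTransform, integral_const_mul] using h_lim

theorem tendsto_cauchyTransform_cobounded (hμ : IsBounded μ.support) :
    Tendsto (cauchyTransform μ) (cobounded ℂ) (𝓝 0) := by
  have h_lim : Tendsto (fun z ↦ z⁻¹ * (z * cauchyTransform μ z)) (cobounded ℂ) (𝓝 0) := by
    simpa using tendsto_inv₀_cobounded.mul (tendsto_mul_cauchyTransform_cobounded hμ)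
  refine h_lim.congr' ?_
  filter_upwards [eventually_ne_cobounded 0] with z hz
  exact inv_mul_cancel_left₀ hz _

theorem exists_cauchyTransform_ne [NeZero μ] (hμ : IsBounded μ.support) :
    ∃ z w, cauchyTransform μ z ≠ cauchyTransform μ w := by
  by_contra! h_const
  have h_zero (z : ℂ) : cauchyTransform μ z = 0 :=
    tendsto_nhds_unique (tendsto_const_nhds.congr (h_const z))
      (tendsto_cauchyTransform_cobounded hμ)
  have h_mass : (0 : ℂ) = μ.real Set.univ := by
    simpa [h_zero] using tendsto_mul_cauchyTransform_cobounded hμ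
  exact measureReal_univ_ne_zero (Complex.ofReal_eq_zero.1 h_mass.symm)

theorem exists_continuous_differentiableOn_compl_of_volume_pos {L : Set ℂ} (hL : IsCompact L)
    (hL_pos : 0 < volume L) :
    ∃ f : ℂ → ℂ, Continuous f ∧ DifferentiableOn ℂ f Lᶜ ∧
      Tendsto f (cocompact ℂ) (𝓝 0) ∧ ∃ z w : ℂ, f z ≠ f w := by
  set μ : Measure ℂ := volume.restrict L
  have : IsFiniteMeasure μ := isFiniteMeasure_restrict.2 hL.measure_ne_top
  have : NeZero μ := ⟨Measure.restrict_eq_zero.not.2 hL_pos.ne'⟩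
  have h_support : μ.support ⊆ L :=
    Measure.support_subset_of_isClosed hL.isClosed (ae_restrict_mem hL.measurableSet)
  have h_bounded : IsBounded μ.support := hL.isBounded.subset h_support
  refine ⟨cauchyTransform μ, continuous_cauchyTransform_restrict hL,
    differentiableOn_cauchyTransform.mono (Set.compl_subset_compl.2 h_support), ?_,
    exists_cauchyTransform_ne h_bounded⟩
  rw [← Metric.cobounded_eq_cocompact]
  exact tendsto_cauchyTransform_cobounded h_bounded

end CauchyTransform

/-- There exists a compact set `L ⊆ ℂ` with empty interior (so `ã₁(L) = 0`) for which
there is a nonconstant function `f : ℂ → ℂ` continuous on `ℂ`, holomorphic on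
`ℂ \ L`, with a finite limit at infinity (so `ã₀(L) = a(L) > 0`). -/
theorem exists_compact_empty_interior_positive_capacity :
    ∃ L : Set ℂ, IsCompact L ∧ interior L = ∅ ∧
      ∃ f : ℂ → ℂ, Continuous f ∧ DifferentiableOn ℂ f Lᶜ ∧
        (∃ c : ℂ, Tendsto f (cocompact ℂ) (nhds c)) ∧
        ∃ z w : ℂ, f z ≠ f w := by
  obtain ⟨L, hL, hL_interior, hL_pos⟩ :=
    exists_isCompact_interior_eq_empty_measure_pos (MeasureTheory.volume (α := ℂ))
  obtain ⟨f, hf_cont, hf_diff, hf_lim, hf_nonconst⟩ :=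
    exists_continuous_differentiableOn_compl_of_volume_pos hL hL_pos
  exact ⟨L, hL, hL_interior, f, hf_cont, hf_diff, ⟨0, hf_lim⟩, hf_nonconst⟩
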